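/- Fix integers q ≥ 1 and γ with 0 ≤ γ ≤ q-1, and reals K < 0 and u > 0. Then lim_{d→∞} P(d,q,γ,K,u) = 0, i.e. for fixed negative curvature the intersection probability tends to 0 as the dimension d tends to infinity. -/

import Mathlib

open Real MeasureTheory Filter Asymptotics

/-- Surface area `ω_n = 2 π^{n/2} / Γ(n/2)` of the Euclidean unit sphere in `ℝ^n`. -/
noncomputable def omegaS (n : ℕ) : ℝ := 2 * Real.pi ^ ((n : ℝ) / 2) / Real.Gamma ((n : ℝ) / 2)

/-- The constant `D(d,q,γ)`. -/
noncomputable def Dconst (d q γ : ℕ) : ℝ :=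
  omegaS (γ + 1) * omegaS (q - γ) * omegaS (d - q) / (omegaS (d - q + γ + 1) * omegaS (d - γ))

/-- `R_K(x)`, the Euclidean (Beltrami–Klein) radius of a hyperbolic ball of radius `x`. -/
noncomputable def RK (K x : ℝ) : ℝ :=
  Real.sinh (Real.sqrt (-K) * x) /
    (Real.sqrt (-K) * Real.sqrt (1 + Real.sinh (Real.sqrt (-K) * x) ^ 2))

/-- `C_K(d,m,u)`, the invariant measure of the `m`-flats meeting the ball of radius `u`. -/
noncomputable def Cconst (K : ℝ) (d m : ℕ) (u : ℝ) : ℝ :=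
  omegaS (d - m) * Real.sqrt (-K) ^ (-(d : ℝ) + (m : ℝ) + 1) *
    ∫ r in (0:ℝ)..u,
      Real.cosh (Real.sqrt (-K) * r) ^ m * Real.sinh (Real.sqrt (-K) * r) ^ (d - m - 1)

/-- `P(d,q,γ,K,u)`, the hyperbolic intersection probability of the random flats `E` and `L`. -/
noncomputable def Pprob (d q γ : ℕ) (K u : ℝ) : ℝ :=
  Dconst d q γ * omegaS (d - γ) / Cconst K d (d - q + γ) u *
    ∫ r in (0:ℝ)..(1 / Real.sqrt (-K)),
      r ^ ((q : ℝ) - (γ : ℝ) - 1) *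
        ∫ z in (0:ℝ)..(min 1 (RK K u / r)),
          z ^ q * (1 - z ^ 2) ^ (((d : ℝ) - (q : ℝ)) / 2 - 1) *
            (1 + K * r ^ 2 * z ^ 2) ^ (-((d : ℝ) + 1) / 2)

/-- `F_{K,u}(δ)`, the distribution function of the distance of `E ∩ L` to the origin. -/
noncomputable def Fdist (d q γ : ℕ) (K u δ : ℝ) : ℝ :=
  Dconst d q γ * omegaS (d - γ) / Cconst K d (d - q + γ) u *
    ∫ r in (0:ℝ)..(RK K δ),
      r ^ ((q : ℝ) - (γ : ℝ) - 1) *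
        ∫ z in (0:ℝ)..(min 1 (RK K u / r)),
          z ^ q * (1 - z ^ 2) ^ (((d : ℝ) - (q : ℝ)) / 2 - 1) *
            (1 + K * r ^ 2 * z ^ 2) ^ (-((d : ℝ) + 1) / 2)

/-- `f_{d,q,γ,K}(δ)`, the density of the distance of `E ∩ L` to the origin. -/
noncomputable def fdens (d q γ : ℕ) (K u δ : ℝ) : ℝ :=
  Dconst d q γ * omegaS (d - γ) / Cconst K d (d - q + γ) u *
    (RK K δ ^ ((q : ℝ) - (γ : ℝ) - 1) / Real.cosh (Real.sqrt (-K) * δ) ^ 2) *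
    ∫ z in (0:ℝ)..(min 1 (RK K u / RK K δ)),
      z ^ q * (1 - z ^ 2) ^ (((d : ℝ) - (q : ℝ)) / 2 - 1) *
        (1 + K * RK K δ ^ 2 * z ^ 2) ^ (-((d : ℝ) + 1) / 2)

/-- The limiting constant `ρ(u,q,γ,κ)` in the critical phase. -/
noncomputable def rhoConst (u : ℝ) (q γ : ℕ) (κ : ℝ) : ℝ :=
  omegaS (γ + 1) * (2 * Real.pi) ^ (-((γ : ℝ) + 1) / 2) * u ^ (q + 1) *
    κ ^ (((γ : ℝ) + 1) / 2) *
    (∫ s in (0:ℝ)..u, Real.exp (κ * s ^ 2 / 2) * s ^ ((q : ℝ) - (γ : ℝ) - 1))⁻¹ *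
    ∫ r in (0:ℝ)..1,
      r ^ ((q : ℝ) - (γ : ℝ) - 1) *
        ∫ v in (0:ℝ)..(1 / r),
          v ^ q * Real.exp (-(1 / 2) * u ^ 2 * κ * v ^ 2 * (1 - r ^ 2))

/-!
Put `c(v) = cosh (√(-K) v)`. The prefactor `D(d,q,γ) ω_{d-γ}` is a constant multiple of
`ω_{d-q} / ω_{d-q+γ+1}`, which log-convexity of the Gamma function bounds by a multiple of
`d^{(γ+1)/2}`. The invariant measure `C_K(d, d-q+γ, u)` is at least a constant times `c(v)^d` for
every `0 < v < u`, because its integrand contains `cosh^{d-q+γ}` and `[v, u]` has positive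
length. The remaining double integral stays bounded: on its domain `1 - z²` is at most
`w = 1 + K r² z²`, so the powers of `w` that grow with `d` cancel and leave at most
`w^{-(q+3)/2}`, while `w ≥ c(u)⁻²`. Hence `P` is `O(d^{(γ+1)/2} c(v)^{-d})`.
-/

lemma Gamma_add_half_le_sqrt_mul_Gamma {x : ℝ} (hx : 0 < x) :
    Gamma (x + 1 / 2) ≤ √x * Gamma x := by
  have hΓ : 0 ≤ Gamma x := (Gamma_pos_of_pos hx).le
  calc Gamma (x + 1 / 2) = Gamma (1 / 2 * x + 1 / 2 * (x + 1)) := by ring_nf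
    _ ≤ Gamma x ^ (1 / 2 : ℝ) * Gamma (x + 1) ^ (1 / 2 : ℝ) :=
        Gamma_mul_add_mul_le_rpow_Gamma_mul_rpow_Gamma hx (by positivity) (by norm_num)
          (by norm_num) (by norm_num)
    _ = √x * (√(Gamma x) * √(Gamma x)) := by
        rw [Gamma_add_one hx.ne', ← sqrt_eq_rpow, ← sqrt_eq_rpow, sqrt_mul hx.le]
        ring
    _ = √x * Gamma x := by rw [mul_self_sqrt hΓ]

lemma omegaS_pos {n : ℕ} (hn : 0 < n) : 0 < omegaS n := by
  have : 0 < Gamma ((n : ℝ) / 2) := Gamma_pos_of_pos (by positivity)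
  unfold omegaS
  positivity

lemma omegaS_le_sqrt_mul_omegaS_succ {n : ℕ} (hn : 0 < n) :
    omegaS n ≤ √n * omegaS (n + 1) := by
  have hn2 : (0 : ℝ) < n / 2 := by positivity
  have hcast : ((n + 1 : ℕ) : ℝ) / 2 = n / 2 + 1 / 2 := by push_cast; ring
  have hΓ : 0 < Gamma ((n : ℝ) / 2) := Gamma_pos_of_pos hn2
  have hΓ' : 0 < Gamma ((n : ℝ) / 2 + 1 / 2) := Gamma_pos_of_pos (by positivity)
  have hpi : π ^ ((n : ℝ) / 2) ≤ π ^ ((n : ℝ) / 2 + 1 / 2) :=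
    rpow_le_rpow_of_exponent_le (by linarith [pi_gt_three]) (by linarith)
  have hΓ_le : Gamma ((n : ℝ) / 2 + 1 / 2) ≤ √n * Gamma ((n : ℝ) / 2) := by
    refine (Gamma_add_half_le_sqrt_mul_Gamma hn2).trans ?_
    gcongr
    linarith
  unfold omegaS
  rw [hcast, mul_div_assoc', div_le_div_iff₀ hΓ hΓ']
  calc 2 * π ^ ((n : ℝ) / 2) * Gamma ((n : ℝ) / 2 + 1 / 2)
      ≤ 2 * π ^ ((n : ℝ) / 2 + 1 / 2) * (√n * Gamma ((n : ℝ) / 2)) := by gcongr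
    _ = √n * (2 * π ^ ((n : ℝ) / 2 + 1 / 2)) * Gamma ((n : ℝ) / 2) := by ring

lemma omegaS_le_sqrt_pow_mul_omegaS_add {n : ℕ} (hn : 0 < n) (m : ℕ) :
    omegaS n ≤ √(n + m : ℕ) ^ m * omegaS (n + m) := by
  induction m with
  | zero => simp
  | succ m ih =>
    have hω : 0 < omegaS (n + (m + 1)) := omegaS_pos (by lia)
    have hsqrt : √(n + m : ℕ) ≤ √(n + (m + 1) : ℕ) := by gcongr; lia
    calc omegaS n ≤ √(n + m : ℕ) ^ m * omegaS (n + m) := ih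
      _ ≤ √(n + m : ℕ) ^ m * (√(n + m : ℕ) * omegaS (n + (m + 1))) := by
          gcongr
          exact omegaS_le_sqrt_mul_omegaS_succ (by lia)
      _ = √(n + m : ℕ) ^ (m + 1) * omegaS (n + (m + 1)) := by ring
      _ ≤ √(n + (m + 1) : ℕ) ^ (m + 1) * omegaS (n + (m + 1)) := by gcongr

lemma Dconst_mul_omegaS {d q γ : ℕ} (hd : γ < d) :
    Dconst d q γ * omegaS (d - γ) =
      omegaS (γ + 1) * omegaS (q - γ) * (omegaS (d - q) / omegaS (d - q + (γ + 1))) := by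
  have hω : omegaS (d - γ) ≠ 0 := (omegaS_pos (by lia)).ne'
  rw [Dconst, add_assoc, div_mul_eq_mul_div, mul_div_mul_right _ _ hω, mul_div_assoc]

lemma Dconst_mul_omegaS_isBigO {q γ : ℕ} (hγ : γ < q) :
    (fun d : ℕ => Dconst d q γ * omegaS (d - γ)) =O[atTop] fun d : ℕ => √d ^ (γ + 1) := by
  refine .of_bound (omegaS (γ + 1) * omegaS (q - γ)) ?_
  filter_upwards [eventually_gt_atTop q] with d hd
  have hω₁ : 0 < omegaS (γ + 1) := omegaS_pos (by lia)
  have hω₂ : 0 < omegaS (q - γ) := omegaS_pos (by lia)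
  have hω₃ : 0 < omegaS (d - q) := omegaS_pos (by lia)
  have hω₄ : 0 < omegaS (d - q + (γ + 1)) := omegaS_pos (by lia)
  have hratio : omegaS (d - q) / omegaS (d - q + (γ + 1)) ≤ √d ^ (γ + 1) :=
    calc omegaS (d - q) / omegaS (d - q + (γ + 1)) ≤ √(d - q + (γ + 1) : ℕ) ^ (γ + 1) :=
          (div_le_iff₀ hω₄).2 (omegaS_le_sqrt_pow_mul_omegaS_add (by lia) _)
      _ ≤ √d ^ (γ + 1) := by gcongr; lia
  rw [Dconst_mul_omegaS (hγ.trans hd), norm_of_nonneg (by positivity),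
    norm_of_nonneg (by positivity)]
  gcongr

lemma sub_mul_le_integral_of_monotoneOn {f : ℝ → ℝ} {a v b : ℝ} (hav : a ≤ v) (hvb : v ≤ b)
    (hf : MonotoneOn f (Set.Icc a b)) (hfa : 0 ≤ f a) :
    (b - v) * f v ≤ ∫ x in a..b, f x := by
  have hab : a ≤ b := hav.trans hvb
  have hint : IntervalIntegrable f volume a b :=
    MonotoneOn.intervalIntegrable (by rwa [Set.uIcc_of_le hab])
  have hint' : IntervalIntegrable f volume v b :=
    hint.mono_set (by
      rw [Set.uIcc_of_le hvb, Set.uIcc_of_le hab]; exact Set.Icc_subset_Icc_left hav)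
  have hnonneg : ∀ x ∈ Set.Ioc a b, 0 ≤ f x := fun x hx =>
    hfa.trans (hf (Set.left_mem_Icc.2 hab) (Set.Ioc_subset_Icc_self hx) hx.1.le)
  calc (b - v) * f v = ∫ _ in v..b, f v := by simp
    _ ≤ ∫ x in v..b, f x :=
        intervalIntegral.integral_mono_on hvb (by simp) hint' fun x hx =>
          hf ⟨hav, hvb⟩ ⟨hav.trans hx.1, hx.2⟩ hx.1
    _ ≤ ∫ x in a..b, f x :=
        intervalIntegral.integral_mono_interval hav hvb le_rfl
          ((ae_restrict_iff' measurableSet_Ioc).2 (.of_forall hnonneg)) hint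

lemma monotoneOn_cosh_pow_mul_sinh_pow {k : ℝ} (hk : 0 ≤ k) (m j : ℕ) :
    MonotoneOn (fun r => cosh (k * r) ^ m * sinh (k * r) ^ j) (Set.Ici 0) := by
  intro r (hr : 0 ≤ r) s _ hrs
  have hkr : 0 ≤ k * r := by positivity
  have hle : k * r ≤ k * s := by gcongr
  have : 0 ≤ sinh (k * r) := sinh_nonneg_iff.2 hkr
  have hcosh : cosh (k * r) ≤ cosh (k * s) :=
    cosh_strictMonoOn.monotoneOn hkr (hkr.trans hle) hle
  have hsinh : sinh (k * r) ≤ sinh (k * s) := sinh_le_sinh.2 hle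
  dsimp only
  gcongr

lemma le_Cconst (K : ℝ) {d m : ℕ} (hm : m < d) {u v : ℝ} (hv : 0 ≤ v) (hvu : v ≤ u) :
    omegaS (d - m) * √(-K) ^ (-(d : ℝ) + m + 1) *
      ((u - v) * (cosh (√(-K) * v) ^ m * sinh (√(-K) * v) ^ (d - m - 1))) ≤ Cconst K d m u := by
  have hω : 0 < omegaS (d - m) := omegaS_pos (by lia)
  have hmono : MonotoneOn (fun r => cosh (√(-K) * r) ^ m * sinh (√(-K) * r) ^ (d - m - 1))
      (Set.Icc 0 u) :=
    (monotoneOn_cosh_pow_mul_sinh_pow (sqrt_nonneg _) _ _).mono Set.Icc_subset_Ici_self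
  unfold Cconst
  gcongr
  exact sub_mul_le_integral_of_monotoneOn hv hvu hmono (by simp)

lemma cosh_pow_isBigO_Cconst {q γ : ℕ} (hγ : γ < q) {K u v : ℝ} (hK : K < 0) (hv : 0 < v)
    (hvu : v < u) :
    (fun d : ℕ => cosh (√(-K) * v) ^ d) =O[atTop] fun d : ℕ => Cconst K d (d - q + γ) u := by
  have hk : 0 < √(-K) := sqrt_pos.2 (neg_pos.2 hK)
  set c := cosh (√(-K) * v)
  set B := omegaS (q - γ) * √(-K) ^ (-(q : ℝ) + γ + 1) *
    ((u - v) * sinh (√(-K) * v) ^ (q - γ - 1)) with hB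
  have : 0 < c := cosh_pos _
  have hB_pos : 0 < B := by
    have : 0 < omegaS (q - γ) := omegaS_pos (by lia)
    have : 0 < sinh (√(-K) * v) := sinh_pos_iff.2 (by positivity)
    have : 0 < u - v := sub_pos.2 hvu
    positivity
  refine .of_bound (c ^ (q - γ) / B) ?_
  filter_upwards [eventually_ge_atTop q] with d hd
  have hcodim : d - (d - q + γ) = q - γ := by lia
  have hexp : -(d : ℝ) + (d - q + γ : ℕ) + 1 = -(q : ℝ) + γ + 1 := by
    push_cast [Nat.cast_sub hd]; ring
  have hlower : B * c ^ (d - q + γ) ≤ Cconst K d (d - q + γ) u := by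
    convert le_Cconst K (by lia : d - q + γ < d) hv.le hvu.le using 1
    rw [hcodim, hexp, hB]
    ring
  rw [norm_of_nonneg (by positivity)]
  calc c ^ d = c ^ (q - γ) / B * (B * c ^ (d - q + γ)) := by
        rw [← mul_assoc, div_mul_cancel₀ _ hB_pos.ne', ← pow_add]; congr 1; lia
    _ ≤ c ^ (q - γ) / B * ‖Cconst K d (d - q + γ) u‖ := by
        gcongr
        exact hlower.trans (le_norm_self _)

lemma RK_eq_tanh_div (K x : ℝ) : RK K x = tanh (√(-K) * x) / √(-K) := by
  rw [RK, ← cosh_sq', sqrt_sq (cosh_pos _).le, mul_comm √(-K) (cosh _), ← div_div,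
    tanh_eq_sinh_div_cosh]

lemma RK_nonneg (K : ℝ) {x : ℝ} (hx : 0 ≤ x) : 0 ≤ RK K x := by
  have : 0 ≤ sinh (√(-K) * x) := sinh_nonneg_iff.2 (by positivity)
  unfold RK
  positivity

lemma one_add_mul_RK_sq {K : ℝ} (hK : K < 0) (x : ℝ) :
    1 + K * RK K x ^ 2 = (cosh (√(-K) * x) ^ 2)⁻¹ := by
  have hc : cosh (√(-K) * x) ≠ 0 := (cosh_pos _).ne'
  rw [RK_eq_tanh_div, div_pow, sq_sqrt (neg_pos.2 hK).le, tanh_eq_sinh_div_cosh, div_pow, sinh_sq]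
  field_simp [hK.ne]
  ring

lemma rpow_mul_rpow_le_of_le {a b ε s t : ℝ} (ha : 0 ≤ a) (hab : a ≤ b) (hε : 0 < ε) (hεb : ε ≤ b)
    (hs : 0 ≤ s) (hst : s + t ≤ 0) : a ^ s * b ^ t ≤ ε ^ (s + t) := by
  have hb : 0 < b := hε.trans_le hεb
  calc a ^ s * b ^ t ≤ b ^ s * b ^ t := by gcongr
    _ = b ^ (s + t) := (rpow_add hb s t).symm
    _ ≤ ε ^ (s + t) := rpow_le_rpow_of_nonpos hε hεb hst

/-- The integrand of the inner integral in `Pprob`, in the coordinates of the Beltrami–Klein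
model. -/
noncomputable def kleinIntegrand (d q : ℕ) (K r z : ℝ) : ℝ :=
  z ^ q * (1 - z ^ 2) ^ (((d : ℝ) - (q : ℝ)) / 2 - 1) *
    (1 + K * r ^ 2 * z ^ 2) ^ (-((d : ℝ) + 1) / 2)

/-- The double integral in `Pprob`, so that `P = D(d,q,γ) ω_{d-γ} / C_K(d,d-q+γ,u)` times it. -/
noncomputable def kleinIntegral (d q γ : ℕ) (K u : ℝ) : ℝ :=
  ∫ r in (0 : ℝ)..(1 / √(-K)),
    r ^ ((q : ℝ) - (γ : ℝ) - 1) * ∫ z in (0 : ℝ)..(min 1 (RK K u / r)), kleinIntegrand d q K r z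

lemma Pprob_eq_mul_kleinIntegral (d q γ : ℕ) (K u : ℝ) :
    Pprob d q γ K u =
      Dconst d q γ * omegaS (d - γ) * (Cconst K d (d - q + γ) u)⁻¹ * kleinIntegral d q γ K u :=
  rfl

lemma abs_kleinIntegrand_le {d q : ℕ} (hd : q + 2 ≤ d) {K r z u : ℝ} (hK : K < 0) (hr : 0 ≤ r)
    (hr' : r ≤ 1 / √(-K)) (hz : 0 ≤ z) (hz' : z ≤ 1) (hzr : z * r ≤ RK K u) :
    |kleinIntegrand d q K r z| ≤ cosh (√(-K) * u) ^ (q + 3) := by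
  have hk : 0 < √(-K) := sqrt_pos.2 (neg_pos.2 hK)
  have hc : 0 < cosh (√(-K) * u) := cosh_pos _
  have hdR : (q : ℝ) + 2 ≤ d := by exact_mod_cast hd
  have hKr : -K * r ^ 2 ≤ 1 := by
    rw [← sq_sqrt (neg_pos.2 hK).le, ← mul_pow]
    exact pow_le_one₀ (by positivity) ((le_div_iff₀' hk).1 hr')
  have hz_sq : 0 ≤ 1 - z ^ 2 := sub_nonneg.2 (pow_le_one₀ hz hz')
  have hle : 1 - z ^ 2 ≤ 1 + K * r ^ 2 * z ^ 2 := by nlinarith [sq_nonneg z]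
  have hlower : (cosh (√(-K) * u) ^ 2)⁻¹ ≤ 1 + K * r ^ 2 * z ^ 2 := by
    have hsq : (z * r) ^ 2 ≤ RK K u ^ 2 := by gcongr
    rw [← one_add_mul_RK_sq hK]
    nlinarith
  have hpos : 0 < 1 + K * r ^ 2 * z ^ 2 := lt_of_lt_of_le (by positivity) hlower
  have hexp : ((d : ℝ) - q) / 2 - 1 + -((d : ℝ) + 1) / 2 = -((q + 3 : ℕ) : ℝ) / 2 := by
    push_cast; ring
  rw [kleinIntegrand, abs_of_nonneg (by positivity), mul_assoc]
  calc z ^ q * ((1 - z ^ 2) ^ (((d : ℝ) - q) / 2 - 1) *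
        (1 + K * r ^ 2 * z ^ 2) ^ (-((d : ℝ) + 1) / 2))
      ≤ (1 - z ^ 2) ^ (((d : ℝ) - q) / 2 - 1) *
        (1 + K * r ^ 2 * z ^ 2) ^ (-((d : ℝ) + 1) / 2) :=
        mul_le_of_le_one_left (by positivity) (pow_le_one₀ hz hz')
    _ ≤ (cosh (√(-K) * u) ^ 2)⁻¹ ^ (((d : ℝ) - q) / 2 - 1 + -((d : ℝ) + 1) / 2) :=
        rpow_mul_rpow_le_of_le hz_sq hle (by positivity) hlower (by linarith) (by linarith)
    _ = cosh (√(-K) * u) ^ (q + 3) := by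
        rw [hexp, inv_rpow (by positivity), ← rpow_neg (by positivity), ← rpow_natCast_mul hc.le,
          ← rpow_natCast]
        congr 1
        push_cast; ring

lemma abs_integral_kleinIntegrand_le {d q : ℕ} (hd : q + 2 ≤ d) {K r u : ℝ} (hK : K < 0)
    (hr : 0 < r) (hr' : r ≤ 1 / √(-K)) (hu : 0 ≤ u) :
    |∫ z in (0 : ℝ)..(min 1 (RK K u / r)), kleinIntegrand d q K r z| ≤
      cosh (√(-K) * u) ^ (q + 3) := by
  have hR : 0 ≤ RK K u := RK_nonneg K hu
  have hmin : 0 ≤ min 1 (RK K u / r) := by positivity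
  have hbound : ∀ z ∈ Set.uIoc 0 (min 1 (RK K u / r)),
      ‖kleinIntegrand d q K r z‖ ≤ cosh (√(-K) * u) ^ (q + 3) := by
    intro z hz
    rw [Set.uIoc_of_le hmin] at hz
    have hz_le : z ≤ RK K u / r := hz.2.trans (min_le_right _ _)
    exact abs_kleinIntegrand_le hd hK hr.le hr' hz.1.le (hz.2.trans (min_le_left _ _))
      ((le_div_iff₀ hr).1 hz_le)
  refine (intervalIntegral.norm_integral_le_of_norm_le_const hbound).trans ?_
  rw [sub_zero, abs_of_nonneg hmin]
  exact mul_le_of_le_one_right (by positivity) (min_le_left _ _)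

lemma kleinIntegral_isBigO_one {q γ : ℕ} (hγ : γ < q) {K u : ℝ} (hK : K < 0) (hu : 0 ≤ u) :
    (fun d : ℕ => kleinIntegral d q γ K u) =O[atTop] fun _ => (1 : ℝ) := by
  have hk : 0 < √(-K) := sqrt_pos.2 (neg_pos.2 hK)
  have hγR : (γ : ℝ) + 1 ≤ q := by exact_mod_cast hγ
  refine .of_bound ((1 / √(-K)) ^ ((q : ℝ) - γ - 1) * cosh (√(-K) * u) ^ (q + 3) *
    |1 / √(-K) - 0|) ?_
  filter_upwards [eventually_ge_atTop (q + 2)] with d hd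
  rw [norm_one, mul_one, kleinIntegral]
  refine intervalIntegral.norm_integral_le_of_norm_le_const fun r hr => ?_
  rw [Set.uIoc_of_le (by positivity)] at hr
  have hr_pos : 0 < r := hr.1
  rw [norm_mul, norm_of_nonneg (by positivity), Real.norm_eq_abs]
  gcongr
  · linarith
  · exact hr.2
  · exact abs_integral_kleinIntegrand_le hd hK hr_pos hr.2 hu

lemma Pprob_isBigO {q γ : ℕ} (hγ : γ < q) {K u v : ℝ} (hK : K < 0) (hv : 0 < v) (hvu : v < u) :
    (fun d : ℕ => Pprob d q γ K u) =O[atTop]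
      fun d : ℕ => √d ^ (γ + 1) * (cosh (√(-K) * v))⁻¹ ^ d := by
  have hC : (fun d : ℕ => (Cconst K d (d - q + γ) u)⁻¹) =O[atTop]
      fun d : ℕ => (cosh (√(-K) * v) ^ d)⁻¹ :=
    (cosh_pow_isBigO_Cconst hγ hK hv hvu).inv_rev <|
      .of_forall fun d hd => absurd hd (pow_pos (cosh_pos _) d).ne'
  simpa only [Pprob_eq_mul_kleinIntegral, inv_pow, mul_one] using
    ((Dconst_mul_omegaS_isBigO hγ).mul hC).mul
      (kleinIntegral_isBigO_one hγ hK (hv.trans hvu).le)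

lemma tendsto_sqrt_pow_mul_inv_pow_atTop_nhds_zero (k : ℕ) {c : ℝ} (hc : 1 < c) :
    Tendsto (fun n : ℕ => √n ^ k * c⁻¹ ^ n) atTop (nhds 0) := by
  have hc_pos : 0 < c := one_pos.trans hc
  refine squeeze_zero (fun n => by positivity) (fun n => ?_)
    (tendsto_pow_const_mul_const_pow_of_lt_one k (inv_nonneg.2 hc_pos.le)
      (inv_lt_one_of_one_lt₀ hc))
  gcongr
  rw [sqrt_le_self_iff]
  norm_cast
  lia

/-- for fixed negative curvature the intersection probability tends to 0
as the dimension tends to infinity. -/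
theorem intersection_prob_tendsto_zero_highdim (q γ : ℕ) (hq : 1 ≤ q) (hγ : γ ≤ q - 1)
    (K u : ℝ) (hK : K < 0) (hu : 0 < u) :
    Tendsto (fun d : ℕ => Pprob d q γ K u) atTop (nhds 0) := by
  have hγq : γ < q := by lia
  have hcosh : 1 < cosh (√(-K) * (u / 2)) :=
    one_lt_cosh.2 (mul_pos (sqrt_pos.2 (neg_pos.2 hK)) (half_pos hu)).ne'
  exact (Pprob_isBigO hγq hK (half_pos hu) (half_lt_self hu)).trans_tendsto
    (tendsto_sqrt_pow_mul_inv_pow_atTop_nhds_zero (γ + 1) hcosh)
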